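/- Let d ≥ 1, h > 0, κ a positive integer, ρ ∈ ℝ, and L_f, L_g > 0. Then inf over pairs of measurable kernels (K̂_f, K̂_g) of the supremum over F ∈ 𝓕(L_f, 𝟏) and G ∈ 𝓕(L_g, 𝟏) of [ Φ_{hI}(G, K̂_g) + ρ² Φ_{(h/κ)I}(F, K̂_f) ] equals ρ² (L_f/2) (h/(κπ))² + (L_g/2) (h/π)². -/

import Mathlib

open MeasureTheory Real

/-- The interpolation-error functional
`Φ_H(F, K̂) = ∫_{ℝ^d} F(ω) [(1 − K̂(ω))² + ∑_{k ∈ ℤ^d, k ≠ 0} K̂(ω + H⁻¹k)²] dω`,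
where `H = diag(h₁,…,h_d)` and the inner sum is a (possibly infinite) sum of
nonnegative terms, so the value is taken in `ℝ≥0∞`. -/
noncomputable def Phi (d : ℕ) (h : Fin d → ℝ) (F : (Fin d → ℝ) → ℝ)
    (K : (Fin d → ℝ) → ℝ) : ENNReal :=
  ∫⁻ ω : Fin d → ℝ, ENNReal.ofReal (F ω) *
    (ENNReal.ofReal ((1 - K ω) ^ 2) +
      ∑' k : {k : Fin d → ℤ // k ≠ 0},
        ENNReal.ofReal ((K (ω + fun i => (k.1 i : ℝ) / h i)) ^ 2))

/-- The smoothness class `𝓕(L, λ)` of spectral densities: measurable, integrable,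
nonnegative `F` with `(2π)² ∫ F(ω) ∑ᵢ λᵢ² ωᵢ² dω ≤ L`. -/
def SpecClass (d : ℕ) (L : ℝ) (lam : Fin d → ℝ) : Set ((Fin d → ℝ) → ℝ) :=
  {F | Measurable F ∧ Integrable F ∧ (∀ ω, 0 ≤ F ω) ∧
    ENNReal.ofReal ((2 * π) ^ 2) *
      ∫⁻ ω : Fin d → ℝ, ENNReal.ofReal (F ω * ∑ i, (lam i) ^ 2 * (ω i) ^ 2)
        ≤ ENNReal.ofReal L}

/-!
Upper bound. In `ℓ²(ℤᵈ)` the error density of a kernel `K` at the frequency `ω` is `‖δ₀ - p‖²` with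
`p k = K (ω + H⁻¹k)`. If frequencies are rescaled so that the points `v k` of every shifted dual
lattice are at mutual distance at least `1`, then `v k ↦ δ k` is `√2`-Lipschitz, so by Kirszbraun
extension to the single point `0` some `p` satisfies `‖δ k - p‖² ≤ 2 ‖v k‖²` for all `k` at once.
Such a `p` is explicit: the water-filling weights `p k = max 0 (θ - ‖v k‖²)` with `∑ p k = 1`.
As `θ` depends only on the coset of the dual lattice, these weights are the values of one kernel.

Lower bound. For every kernel the error densities at `ω` and `ω + e`, with `e ≠ 0` in the dual
lattice, add up to at least `1`. A spectral density made of two equal bumps near `± e / 2` therefore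
incurs an error of at least half its mass; shrinking the bumps, and taking `e` shortest for the
weighted norm, gives the same constant.
-/

open Filter
open scoped InnerProductSpace

section WaterFilling

variable {ι κ : Type*} {a : ι → ℝ}

/-- The water level of the terrain `a`: the level `c` at which the total depth `∑ max 0 (c - a i)`
is `1`. The sum is taken in `ℝ≥0∞` so that it always makes sense; if `a` tends to infinity along
the cofinite filter, the infimum is attained, and is the only level of total depth `1`. -/
noncomputable def waterLevel (a : ι → ℝ) : ℝ :=
  sInf {c | 1 ≤ ∑' i, ENNReal.ofReal (c - a i)}

/-- The depth of the water above `i` when the terrain `a` is filled with a unit volume of water;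
equivalently the Euclidean projection of `-a` onto the probability simplex. -/
noncomputable def waterWeight (a : ι → ℝ) (i : ι) : ℝ :=
  max 0 (waterLevel a - a i)

lemma waterLevel_comp_equiv (e : ι ≃ κ) (a : κ → ℝ) : waterLevel (a ∘ e) = waterLevel a := by
  have htsum : ∀ c, ∑' i, ENNReal.ofReal (c - a (e i)) = ∑' k, ENNReal.ofReal (c - a k) :=
    fun c => e.tsum_eq fun k => ENNReal.ofReal (c - a k)
  simp only [waterLevel, Function.comp_apply, htsum]

lemma waterWeight_comp_equiv (e : ι ≃ κ) (a : κ → ℝ) (i : ι) :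
    waterWeight (a ∘ e) i = waterWeight a (e i) := by
  rw [waterWeight, waterLevel_comp_equiv, Function.comp_apply, waterWeight]

lemma waterWeight_nonneg (a : ι → ℝ) (i : ι) : 0 ≤ waterWeight a i :=
  le_max_left _ _

lemma monotone_tsum_ofReal_sub (a : ι → ℝ) :
    Monotone fun c => ∑' i, ENNReal.ofReal (c - a i) := fun _ _ hc => by
  dsimp only; gcongr

lemma continuousOn_tsum_ofReal_sub (ha : Tendsto a cofinite atTop) (M : ℝ) :
    ContinuousOn (fun c => ∑' i, ENNReal.ofReal (c - a i)) (Set.Iic M) := by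
  have hfin : {i | ¬ M ≤ a i}.Finite := ha.eventually_ge_atTop M
  have hsum : ContinuousOn (fun c => ∑ i ∈ hfin.toFinset, ENNReal.ofReal (c - a i))
      (Set.Iic M) := (continuous_finsetSum _ fun i _ =>
        ENNReal.continuous_ofReal.comp (continuous_sub_right (a i))).continuousOn
  refine hsum.congr fun c hc => tsum_eq_sum fun i hi => ?_
  have hMi : M ≤ a i := by simpa using hi
  exact ENNReal.ofReal_of_nonpos (sub_nonpos.2 (hc.trans hMi))

lemma exists_tsum_ofReal_sub_eq_one [Nonempty ι] (ha : Tendsto a cofinite atTop) :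
    ∃ c, ∑' i, ENNReal.ofReal (c - a i) = 1 := by
  obtain ⟨i₀, hmin⟩ := ha.exists_forall_le
  have hlow : ∑' i, ENNReal.ofReal (a i₀ - a i) = 0 := by
    simpa [ENNReal.ofReal_eq_zero] using hmin
  have hhigh : 1 ≤ ∑' i, ENNReal.ofReal (a i₀ + 1 - a i) := by
    simpa using ENNReal.le_tsum (f := fun i => ENNReal.ofReal (a i₀ + 1 - a i)) i₀
  obtain ⟨c, -, hc⟩ := intermediate_value_Icc (lt_add_one (a i₀)).le
    ((continuousOn_tsum_ofReal_sub ha (a i₀ + 1)).mono Set.Icc_subset_Iic_self)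
    ⟨hlow.trans_le zero_le_one, hhigh⟩
  exact ⟨c, hc⟩

lemma isLeast_of_tsum_ofReal_sub_eq_one {c : ℝ} (hc : ∑' i, ENNReal.ofReal (c - a i) = 1) :
    IsLeast {c | 1 ≤ ∑' i, ENNReal.ofReal (c - a i)} c := by
  refine ⟨hc.ge, fun b hb => le_of_not_gt fun hbc => (Set.mem_ofPred.1 hb).not_gt ?_⟩
  obtain ⟨i, hi⟩ : ∃ i, a i < c := by
    by_contra! hle
    simp [ENNReal.ofReal_of_nonpos (sub_nonpos.2 (hle _))] at hc
  have hmono := monotone_tsum_ofReal_sub a hbc.le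
  rw [← hc]
  refine ENNReal.tsum_lt_tsum (i := i) ((hmono.trans_eq hc).trans_lt ENNReal.one_lt_top).ne
    (fun j => by gcongr) ?_
  exact (ENNReal.ofReal_lt_ofReal_iff (sub_pos.2 hi)).2 (sub_lt_sub_right hbc _)

lemma tsum_ofReal_waterLevel_sub [Nonempty ι] (ha : Tendsto a cofinite atTop) :
    ∑' i, ENNReal.ofReal (waterLevel a - a i) = 1 := by
  obtain ⟨c, hc⟩ := exists_tsum_ofReal_sub_eq_one ha
  rwa [waterLevel, (isLeast_of_tsum_ofReal_sub_eq_one hc).csInf_eq]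

lemma waterLevel_le_iff [Nonempty ι] (ha : Tendsto a cofinite atTop) {c : ℝ} :
    waterLevel a ≤ c ↔ 1 ≤ ∑' i, ENNReal.ofReal (c - a i) := by
  have hlevel := tsum_ofReal_waterLevel_sub ha
  exact ⟨fun h => hlevel.ge.trans (monotone_tsum_ofReal_sub a h),
    fun h => (isLeast_of_tsum_ofReal_sub_eq_one hlevel).2 h⟩

lemma exists_finset_sum_waterWeight_eq_one [Nonempty ι] (ha : Tendsto a cofinite atTop) :
    ∃ s : Finset ι, (∀ i ∉ s, waterWeight a i = 0) ∧ ∑ i ∈ s, waterWeight a i = 1 := by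
  have hfin : {i | ¬ waterLevel a ≤ a i}.Finite := ha.eventually_ge_atTop _
  have hzero : ∀ i ∉ hfin.toFinset, waterWeight a i = 0 := fun i hi => by
    have hle : waterLevel a ≤ a i := by simpa using hi
    exact max_eq_left (sub_nonpos.2 hle)
  refine ⟨hfin.toFinset, hzero, ?_⟩
  rw [← ENNReal.ofReal_eq_one,
    ENNReal.ofReal_sum_of_nonneg fun i _ => waterWeight_nonneg a i,
    ← tsum_ofReal_waterLevel_sub ha, ← tsum_eq_sum (L := .unconditional ι) fun i hi => by
      rw [hzero i hi, ENNReal.ofReal_zero]]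
  simp [waterWeight, ENNReal.ofReal_max]

lemma measurable_waterLevel {α : Type*} [MeasurableSpace α] [Countable ι] [Nonempty ι]
    {a : α → ι → ℝ} (hmeas : ∀ i, Measurable fun x => a x i)
    (ha : ∀ x, Tendsto (a x) cofinite atTop) : Measurable fun x => waterLevel (a x) := by
  refine measurable_of_Iic fun c => ?_
  have hpre : (fun x => waterLevel (a x)) ⁻¹' Set.Iic c =
      {x | 1 ≤ ∑' i, ENNReal.ofReal (c - a x i)} := Set.ext fun x => waterLevel_le_iff (ha x)
  rw [hpre]
  exact measurableSet_le measurable_const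
    (.tsum fun i => ((hmeas i).const_sub c).ennreal_ofReal)

end WaterFilling

section SeparatedFamily

variable {ι E : Type*} [NormedAddCommGroup E] {v : ι → E}

lemma tendsto_norm_pow_cofinite_of_pairwise_le_dist [ProperSpace E] {ε : ℝ} (hε : 0 < ε)
    (hv : Pairwise fun i j => ε ≤ dist (v i) (v j)) {n : ℕ} (hn : n ≠ 0) :
    Tendsto (fun i => ‖v i‖ ^ n) cofinite atTop := by
  let _ : TopologicalSpace ι := ⊥
  have _ : DiscreteTopology ι := ⟨rfl⟩
  have hcl := Metric.isClosedEmbedding_of_pairwise_le_dist hε hv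
  rw [← cocompact_eq_cofinite]
  exact (tendsto_pow_atTop hn).comp (tendsto_norm_cocompact_atTop.comp hcl.tendsto_cocompact)

variable [InnerProductSpace ℝ E]

/-- Both sides are twice the variance of `v` under the weights `w`. -/
lemma sum_sum_mul_norm_sub_sq {s : Finset ι} {w : ι → ℝ} (hw : ∑ i ∈ s, w i = 1) :
    ∑ i ∈ s, ∑ j ∈ s, w i * w j * ‖v i - v j‖ ^ 2 =
      2 * (∑ i ∈ s, w i * ‖v i‖ ^ 2) - 2 * ‖∑ i ∈ s, w i • v i‖ ^ 2 := by
  have hinner : ‖∑ i ∈ s, w i • v i‖ ^ 2 = ∑ i ∈ s, ∑ j ∈ s, w i * w j * ⟪v i, v j⟫_ℝ := by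
    rw [← real_inner_self_eq_norm_sq, sum_inner]
    simp only [inner_sum, real_inner_smul_left, real_inner_smul_right, mul_assoc, mul_left_comm]
  have hleft : ∑ i ∈ s, ∑ j ∈ s, w i * w j * ‖v i‖ ^ 2 = ∑ i ∈ s, w i * ‖v i‖ ^ 2 := by
    simp only [mul_right_comm _ (w _), ← Finset.mul_sum, hw, mul_one]
  have hright : ∑ i ∈ s, ∑ j ∈ s, w i * w j * ‖v j‖ ^ 2 = ∑ i ∈ s, w i * ‖v i‖ ^ 2 := by
    simp only [mul_assoc, ← Finset.mul_sum, ← Finset.sum_mul, hw, one_mul]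
  have hexp : ∀ i j, w i * w j * ‖v i - v j‖ ^ 2 =
      w i * w j * ‖v i‖ ^ 2 + w i * w j * ‖v j‖ ^ 2 - 2 * (w i * w j * ⟪v i, v j⟫_ℝ) :=
    fun i j => by rw [norm_sub_sq_real]; ring
  simp only [hexp, Finset.sum_sub_distrib, Finset.sum_add_distrib, ← Finset.mul_sum]
  rw [hleft, hright, hinner]
  ring

lemma one_sub_sum_sq_le_two_mul_sum_mul_norm_sq {s : Finset ι} {w : ι → ℝ} (hw₀ : ∀ i, 0 ≤ w i)
    (hw : ∑ i ∈ s, w i = 1) (hv : Pairwise fun i j => 1 ≤ dist (v i) (v j)) :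
    1 - ∑ i ∈ s, w i ^ 2 ≤ 2 * ∑ i ∈ s, w i * ‖v i‖ ^ 2 := by
  classical
  have hterm : ∀ i j, w i * w j - (if i = j then w i * w j else 0) ≤
      w i * w j * ‖v i - v j‖ ^ 2 := fun i j => by
    split_ifs with hij
    · simp [hij]
    · have hone : 1 ≤ ‖v i - v j‖ := by simpa [dist_eq_norm] using hv hij
      simpa using le_mul_of_one_le_right (mul_nonneg (hw₀ i) (hw₀ j)) (one_le_pow₀ hone)
  calc 1 - ∑ i ∈ s, w i ^ 2
      = ∑ i ∈ s, ∑ j ∈ s, (w i * w j - if i = j then w i * w j else 0) := by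
        simp only [Finset.sum_sub_distrib, ← Finset.sum_mul_sum, hw, mul_one,
          Finset.sum_ite_eq, pow_two, Finset.sum_ite_mem, Finset.inter_self]
    _ ≤ ∑ i ∈ s, ∑ j ∈ s, w i * w j * ‖v i - v j‖ ^ 2 :=
        Finset.sum_le_sum fun i _ => Finset.sum_le_sum fun j _ => hterm i j
    _ ≤ 2 * ∑ i ∈ s, w i * ‖v i‖ ^ 2 := by
        rw [sum_sum_mul_norm_sub_sq hw]
        exact sub_le_self _ (by positivity)

variable [ProperSpace E]

lemma one_add_tsum_ofReal_waterWeight_sq_le [Nonempty ι]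
    (hv : Pairwise fun i j => 1 ≤ dist (v i) (v j)) :
    1 + ∑' i, ENNReal.ofReal (waterWeight (‖v ·‖ ^ 2) i ^ 2) ≤
      ENNReal.ofReal (2 * waterLevel (‖v ·‖ ^ 2)) := by
  set θ := waterLevel (‖v ·‖ ^ 2)
  set w := waterWeight (‖v ·‖ ^ 2) with hw
  obtain ⟨s, hzero, hsum⟩ := exists_finset_sum_waterWeight_eq_one
    (tendsto_norm_pow_cofinite_of_pairwise_le_dist one_pos hv two_ne_zero)
  have hmul : ∀ i, w i ^ 2 = θ * w i - w i * ‖v i‖ ^ 2 := fun i => by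
    rcases max_choice 0 (θ - ‖v i‖ ^ 2) with h | h
    · simp [show w i = 0 from h]
    · rw [show w i = θ - ‖v i‖ ^ 2 from h]; ring
  have hsq : ∑ i ∈ s, w i ^ 2 = θ - ∑ i ∈ s, w i * ‖v i‖ ^ 2 := by
    simp only [hmul, Finset.sum_sub_distrib, ← Finset.mul_sum]
    rw [hsum, mul_one]
  have hvar := one_sub_sum_sq_le_two_mul_sum_mul_norm_sq (waterWeight_nonneg _) hsum hv
  rw [tsum_eq_sum fun i hi => by simp [hw, hzero i hi],
    ← ENNReal.ofReal_sum_of_nonneg fun i _ => sq_nonneg _, ← ENNReal.ofReal_one,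
    ← ENNReal.ofReal_add zero_le_one (by positivity)]
  exact ENNReal.ofReal_le_ofReal (by linarith)

theorem sq_error_waterWeight_le (hv : Pairwise fun i j => 1 ≤ dist (v i) (v j)) (i : ι) :
    ENNReal.ofReal ((1 - waterWeight (‖v ·‖ ^ 2) i) ^ 2) +
      ∑' j : {j // j ≠ i}, ENNReal.ofReal (waterWeight (‖v ·‖ ^ 2) j ^ 2) ≤
        ENNReal.ofReal (2 * ‖v i‖ ^ 2) := by
  have _ : Nonempty ι := ⟨i⟩
  set θ := waterLevel (‖v ·‖ ^ 2)
  set w := waterWeight (‖v ·‖ ^ 2)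
  have hw : 0 ≤ w i := waterWeight_nonneg _ i
  have hlevel : θ - ‖v i‖ ^ 2 ≤ w i := le_max_right _ _
  have hsplit : ∑' j, ENNReal.ofReal (w j ^ 2) = ENNReal.ofReal (w i ^ 2) +
      ∑' j : {j // j ≠ i}, ENNReal.ofReal (w j ^ 2) := by
    rw [← ENNReal.summable.tsum_add_tsum_compl (s := {i}) ENNReal.summable,
      tsum_singleton i fun j => ENNReal.ofReal (w j ^ 2)]
    rfl
  -- Adding `2 * w i` to both sides completes the sum of all squares: `(1 - w)² + 2w = 1 + w²`.
  refine (ENNReal.add_le_add_iff_right (a := ENNReal.ofReal (2 * w i)) ENNReal.ofReal_ne_top).1 ?_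
  calc _ = 1 + ∑' j, ENNReal.ofReal (w j ^ 2) := by
        rw [add_right_comm, hsplit, ← add_assoc, ← ENNReal.ofReal_one,
          ← ENNReal.ofReal_add (by positivity) (by positivity),
          ← ENNReal.ofReal_add (by positivity) (by positivity)]
        ring_nf
    _ ≤ ENNReal.ofReal (2 * θ) := one_add_tsum_ofReal_waterWeight_sq_le hv
    _ ≤ ENNReal.ofReal (2 * ‖v i‖ ^ 2 + 2 * w i) := ENNReal.ofReal_le_ofReal (by linarith)
    _ = _ := ENNReal.ofReal_add (by positivity) (by positivity)

end SeparatedFamily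

section LatticeKernel

variable {ι E : Type*} [AddCommGroup ι] [NormedAddCommGroup E] {p : ι →+ E}

/-- The kernel whose values along each coset `x + p k` of the lattice `p` are the water-filling
weights of the terrain `k ↦ ‖x + p k‖²`. -/
noncomputable def latticeKernel (p : ι →+ E) (x : E) : ℝ :=
  waterWeight (fun k => ‖x + p k‖ ^ 2) 0

lemma latticeKernel_add (p : ι →+ E) (x : E) (k : ι) :
    latticeKernel p (x + p k) = waterWeight (fun j => ‖x + p j‖ ^ 2) k := by
  have hshift : (fun j => ‖x + p k + p j‖ ^ 2) =
      (fun j => ‖x + p j‖ ^ 2) ∘ Equiv.addLeft k := by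
    ext j; simp [add_assoc]
  rw [latticeKernel, hshift, waterWeight_comp_equiv, Equiv.coe_addLeft]
  simp only [add_zero]

lemma pairwise_one_le_dist_add (hp : ∀ k ≠ 0, 1 ≤ ‖p k‖) (x : E) :
    Pairwise fun i j => 1 ≤ dist (x + p i) (x + p j) := fun i j hij => by
  change 1 ≤ dist (x + p i) (x + p j)
  rw [dist_add_left, dist_eq_norm, ← map_sub]
  exact hp _ (sub_ne_zero.2 hij)

variable [ProperSpace E]

lemma measurable_latticeKernel [Countable ι] [MeasurableSpace E] [BorelSpace E]
    (hp : ∀ k ≠ 0, 1 ≤ ‖p k‖) : Measurable (latticeKernel p) := by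
  have hdist : ∀ k, Measurable fun x => ‖x + p k‖ ^ 2 := fun k => by fun_prop
  have hlevel := measurable_waterLevel hdist fun x =>
    tendsto_norm_pow_cofinite_of_pairwise_le_dist one_pos (pairwise_one_le_dist_add hp x)
      two_ne_zero
  exact measurable_const.max (hlevel.sub (hdist 0))

theorem sq_error_latticeKernel_le [InnerProductSpace ℝ E] (hp : ∀ k ≠ 0, 1 ≤ ‖p k‖) (x : E) :
    ENNReal.ofReal ((1 - latticeKernel p x) ^ 2) +
      ∑' k : {k // k ≠ 0}, ENNReal.ofReal (latticeKernel p (x + p k.1) ^ 2) ≤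
        ENNReal.ofReal (2 * ‖x‖ ^ 2) := by
  have hle := sq_error_waterWeight_le (pairwise_one_le_dist_add hp x) 0
  rw [map_zero, add_zero] at hle
  simp only [latticeKernel_add]
  exact hle

end LatticeKernel

section Spectral

variable {d : ℕ}

/-- The dual-lattice frequencies `H⁻¹k`, `k ∈ ℤᵈ`, of the grid with steps `h`. -/
noncomputable def freqShift (h : Fin d → ℝ) : (Fin d → ℤ) →+ (Fin d → ℝ) :=
  AddMonoidHom.mk' (fun k i => k i / h i) fun k l => by ext i; simp [add_div]

/-- The interpolation error per unit of spectral mass at the frequency `ω`, that is, the factor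
multiplying `F ω` in `Phi`. -/
noncomputable def aliasingError (h : Fin d → ℝ) (K : (Fin d → ℝ) → ℝ) (ω : Fin d → ℝ) :
    ENNReal :=
  ENNReal.ofReal ((1 - K ω) ^ 2) +
    ∑' k : {k : Fin d → ℤ // k ≠ 0}, ENNReal.ofReal (K (ω + freqShift h k) ^ 2)

lemma Phi_eq_lintegral_aliasingError (h : Fin d → ℝ) (F K : (Fin d → ℝ) → ℝ) :
    Phi d h F K = ∫⁻ ω, ENNReal.ofReal (F ω) * aliasingError h K ω := rfl

/-- The rescaling `ω ↦ (a i * ω i)`, valued in Euclidean space so that its norm is the weighted norm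
appearing in `SpecClass`; the norm of `Fin d → ℝ` itself is the sup norm. -/
noncomputable def weightedCoords (a : Fin d → ℝ) : (Fin d → ℝ) →ₗ[ℝ] EuclideanSpace ℝ (Fin d) :=
  (WithLp.linearEquiv 2 ℝ (Fin d → ℝ)).symm.toLinearMap ∘ₗ LinearMap.mulLeft ℝ a

lemma norm_weightedCoords_sq (a ω : Fin d → ℝ) :
    ‖weightedCoords a ω‖ ^ 2 = ∑ i, a i ^ 2 * ω i ^ 2 := by
  simp [EuclideanSpace.real_norm_sq_eq, weightedCoords, mul_pow]

lemma weightedCoords_smul (c : ℝ) (a ω : Fin d → ℝ) :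
    weightedCoords (c • a) ω = c • weightedCoords a ω := by
  ext i; simp [weightedCoords]

lemma measurable_weightedCoords (a : Fin d → ℝ) : Measurable (weightedCoords a) :=
  (weightedCoords a).continuous_of_finiteDimensional.measurable

lemma mem_SpecClass_iff {L : ℝ} {lam : Fin d → ℝ} {F : (Fin d → ℝ) → ℝ} :
    F ∈ SpecClass d L lam ↔ Measurable F ∧ Integrable F ∧ (∀ ω, 0 ≤ F ω) ∧
      ENNReal.ofReal ((2 * π) ^ 2) *
        ∫⁻ ω, ENNReal.ofReal (F ω) * ENNReal.ofReal (‖weightedCoords lam ω‖ ^ 2) ≤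
          ENNReal.ofReal L := by
  simp only [SpecClass, Set.mem_ofPred_eq, norm_weightedCoords_sq]
  refine and_congr_right fun _ => and_congr_right fun _ => and_congr_right fun hF₀ => ?_
  simp only [ENNReal.ofReal_mul (hF₀ _)]

end Spectral

section UpperBound

variable {d : ℕ} {h a : Fin d → ℝ}

/-- The lattice kernel of the dual lattice in the coordinates rescaled by `a`. It attains the
minimax error for `SpecClass d L lam` when `a = c • lam`, `c` being the largest of the
`h i / lam i`. -/
noncomputable def minimaxKernel (h a : Fin d → ℝ) (ω : Fin d → ℝ) : ℝ :=
  latticeKernel ((weightedCoords a).toAddMonoidHom.comp (freqShift h)) (weightedCoords a ω)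

lemma one_le_norm_weightedCoords_freqShift (hh : ∀ i, 0 < h i) (ha : ∀ i, h i ≤ a i)
    {k : Fin d → ℤ} (hk : k ≠ 0) : 1 ≤ ‖weightedCoords a (freqShift h k)‖ := by
  obtain ⟨i, hi⟩ := Function.ne_iff.1 hk
  have hki : (1 : ℝ) ≤ |(k i : ℝ)| := mod_cast Int.one_le_abs hi
  have hai : 1 ≤ a i / h i := (one_le_div (hh i)).2 (ha i)
  have hcoord : weightedCoords a (freqShift h k) i = a i / h i * k i := by
    simp [weightedCoords, freqShift, mul_div_assoc', div_mul_eq_mul_div]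
  calc 1 ≤ a i / h i * |(k i : ℝ)| := one_le_mul_of_one_le_of_one_le hai hki
    _ = ‖weightedCoords a (freqShift h k) i‖ := by
        rw [hcoord, norm_eq_abs, abs_mul, abs_of_pos (zero_lt_one.trans_le hai)]
    _ ≤ ‖weightedCoords a (freqShift h k)‖ := PiLp.norm_apply_le _ i

lemma measurable_minimaxKernel (hh : ∀ i, 0 < h i) (ha : ∀ i, h i ≤ a i) :
    Measurable (minimaxKernel h a) :=
  (measurable_latticeKernel fun _ => one_le_norm_weightedCoords_freqShift hh ha).comp
    (measurable_weightedCoords a)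

lemma aliasingError_minimaxKernel_le (hh : ∀ i, 0 < h i) (ha : ∀ i, h i ≤ a i) (ω : Fin d → ℝ) :
    aliasingError h (minimaxKernel h a) ω ≤ ENNReal.ofReal (2 * ‖weightedCoords a ω‖ ^ 2) := by
  simp only [aliasingError, minimaxKernel, map_add]
  exact sq_error_latticeKernel_le (fun _ => one_le_norm_weightedCoords_freqShift hh ha) _

theorem Phi_minimaxKernel_le {c L : ℝ} {lam : Fin d → ℝ} {F : (Fin d → ℝ) → ℝ}
    (hh : ∀ i, 0 < h i) (hc : ∀ i, h i ≤ (c • lam) i) (hF : F ∈ SpecClass d L lam) :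
    Phi d h F (minimaxKernel h (c • lam)) ≤ ENNReal.ofReal (L / 2 * (c / π) ^ 2) := by
  obtain ⟨-, -, -, hFL⟩ := mem_SpecClass_iff.1 hF
  calc Phi d h F (minimaxKernel h (c • lam))
      ≤ ∫⁻ ω, ENNReal.ofReal (F ω) * ENNReal.ofReal (2 * ‖weightedCoords (c • lam) ω‖ ^ 2) :=
        lintegral_mono fun ω => mul_le_mul_right (aliasingError_minimaxKernel_le hh hc ω) _
    _ = ∫⁻ ω, ENNReal.ofReal (c ^ 2 / (2 * π ^ 2)) * ENNReal.ofReal ((2 * π) ^ 2) *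
          (ENNReal.ofReal (F ω) * ENNReal.ofReal (‖weightedCoords lam ω‖ ^ 2)) := by
        refine lintegral_congr fun ω => ?_
        rw [mul_left_comm _ (ENNReal.ofReal (F ω))]
        congr 1
        rw [← ENNReal.ofReal_mul (by positivity), ← ENNReal.ofReal_mul (by positivity),
          weightedCoords_smul, norm_smul, mul_pow, norm_eq_abs, sq_abs]
        congr 1
        field_simp
    _ = ENNReal.ofReal (c ^ 2 / (2 * π ^ 2)) * (ENNReal.ofReal ((2 * π) ^ 2) *
          ∫⁻ ω, ENNReal.ofReal (F ω) * ENNReal.ofReal (‖weightedCoords lam ω‖ ^ 2)) := by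
        rw [lintegral_const_mul' _ _ (by finiteness), mul_assoc]
    _ ≤ ENNReal.ofReal (c ^ 2 / (2 * π ^ 2)) * ENNReal.ofReal L := by gcongr
    _ = ENNReal.ofReal (L / 2 * (c / π) ^ 2) := by
        rw [← ENNReal.ofReal_mul (by positivity)]
        congr 1
        field_simp

end UpperBound

section TwinBump

variable {G : Type*} [AddGroup G] {C : ℝ} {B : Set G} {e : G}

/-- The least favourable spectral densities: height `C` on `B` and on its translate by `e`, counted
with multiplicity where they overlap. -/
noncomputable def twinBump (C : ℝ) (B : Set G) (e ω : G) : ℝ :=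
  B.indicator (fun _ => C) ω + B.indicator (fun _ => C) (ω - e)

lemma twinBump_nonneg (hC : 0 ≤ C) (ω : G) : 0 ≤ twinBump C B e ω :=
  add_nonneg (Set.indicator_nonneg (fun _ _ => hC) _) (Set.indicator_nonneg (fun _ _ => hC) _)

variable [MeasurableSpace G] [MeasurableAdd G]

lemma measurable_twinBump (hB : MeasurableSet B) : Measurable (twinBump C B e) :=
  (measurable_const.indicator hB).add
    ((measurable_const.indicator hB).comp (measurable_sub_const' e))

variable {μ : Measure G} [μ.IsAddRightInvariant]

lemma integrable_twinBump (hB : MeasurableSet B) (hμB : μ B ≠ ⊤) :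
    Integrable (twinBump C B e) μ :=
  have hint := (integrableOn_const (C := C) hμB).integrable_indicator hB
  hint.add (hint.comp_sub_right e)

lemma lintegral_twinBump_mul (hC : 0 ≤ C) (hB : MeasurableSet B) {X : G → ENNReal}
    (hX : Measurable X) :
    ∫⁻ ω, ENNReal.ofReal (twinBump C B e ω) * X ω ∂μ =
      ENNReal.ofReal C * ∫⁻ ω in B, (X ω + X (ω + e)) ∂μ := by
  have hsplit : ∀ ω, ENNReal.ofReal (twinBump C B e ω) * X ω =
      ENNReal.ofReal C * (B.indicator X ω + B.indicator (fun η => X (η + e)) (ω - e)) := fun ω => by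
    by_cases h₀ : ω ∈ B <;> by_cases h₁ : ω - e ∈ B <;>
      simp [twinBump, h₀, h₁, ENNReal.ofReal_add hC hC, add_mul, mul_add]
  simp only [hsplit]
  rw [lintegral_const_mul' _ _ ENNReal.ofReal_ne_top, lintegral_add_left (hX.indicator hB),
    lintegral_sub_right_eq_self (B.indicator fun η => X (η + e)), lintegral_indicator hB,
    lintegral_indicator hB, lintegral_add_left hX]

end TwinBump

section LowerBound

variable {d : ℕ} {h lam : Fin d → ℝ} {K : (Fin d → ℝ) → ℝ} {k : Fin d → ℤ} {L : ℝ}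

lemma measurable_aliasingError (h : Fin d → ℝ) (hK : Measurable K) :
    Measurable (aliasingError h K) :=
  ((measurable_const.sub hK).pow_const 2).ennreal_ofReal.add <| .tsum fun k =>
    ((hK.comp (measurable_add_const (freqShift h k.1))).pow_const 2).ennreal_ofReal

lemma le_aliasingError (h : Fin d → ℝ) (K : (Fin d → ℝ) → ℝ) (ω : Fin d → ℝ) (hk : k ≠ 0) :
    ENNReal.ofReal ((1 - K ω) ^ 2 + K (ω + freqShift h k) ^ 2) ≤ aliasingError h K ω := by
  rw [ENNReal.ofReal_add (sq_nonneg _) (sq_nonneg _)]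
  exact add_le_add le_rfl <| ENNReal.le_tsum
    (f := fun k : {k : Fin d → ℤ // k ≠ 0} => ENNReal.ofReal (K (ω + freqShift h k.1) ^ 2)) ⟨k, hk⟩

lemma one_le_aliasingError_add (h : Fin d → ℝ) (K : (Fin d → ℝ) → ℝ) (ω : Fin d → ℝ)
    (hk : k ≠ 0) : 1 ≤ aliasingError h K ω + aliasingError h K (ω + freqShift h k) := by
  have hleft := le_aliasingError h K ω hk
  have hright := le_aliasingError h K (ω + freqShift h k) (neg_ne_zero.2 hk)
  rw [map_neg, add_neg_cancel_right] at hright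
  refine le_trans ?_ (add_le_add hleft hright)
  rw [← ENNReal.ofReal_add (by positivity) (by positivity), ← ENNReal.ofReal_one]
  refine ENNReal.ofReal_le_ofReal ?_
  linarith [sq_nonneg (1 - 2 * K ω), sq_nonneg (1 - 2 * K (ω + freqShift h k))]

lemma mul_volume_le_Phi_twinBump {C : ℝ} {B : Set (Fin d → ℝ)} (hC : 0 ≤ C)
    (hB : MeasurableSet B) (hk : k ≠ 0) (hK : Measurable K) :
    ENNReal.ofReal C * volume B ≤ Phi d h (twinBump C B (freqShift h k)) K := by
  rw [Phi_eq_lintegral_aliasingError,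
    lintegral_twinBump_mul hC hB (measurable_aliasingError h hK), ← setLIntegral_one]
  gcongr with ω
  exact one_le_aliasingError_add h K ω hk

lemma twinBump_mem_SpecClass {C r : ℝ} {B : Set (Fin d → ℝ)} {e : Fin d → ℝ} (hC : 0 ≤ C)
    (hB : MeasurableSet B) (hvol : volume B ≠ ⊤)
    (hr : ∀ ω ∈ B, ‖weightedCoords lam ω‖ ≤ r ∧ ‖weightedCoords lam (ω + e)‖ ≤ r)
    (hL : ENNReal.ofReal (2 * (2 * π * r) ^ 2 * C) * volume B ≤ ENNReal.ofReal L) :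
    twinBump C B e ∈ SpecClass d L lam := by
  refine mem_SpecClass_iff.2 ⟨measurable_twinBump hB, integrable_twinBump hB hvol,
    twinBump_nonneg hC, le_trans ?_ hL⟩
  have hsq : Measurable fun ω => ENNReal.ofReal (‖weightedCoords lam ω‖ ^ 2) :=
    ((measurable_weightedCoords lam).norm.pow_const 2).ennreal_ofReal
  rw [lintegral_twinBump_mul hC hB hsq]
  calc ENNReal.ofReal ((2 * π) ^ 2) * (ENNReal.ofReal C * ∫⁻ ω in B,
        (ENNReal.ofReal (‖weightedCoords lam ω‖ ^ 2) +
          ENNReal.ofReal (‖weightedCoords lam (ω + e)‖ ^ 2)))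
      ≤ ENNReal.ofReal ((2 * π) ^ 2) * (ENNReal.ofReal C * ∫⁻ _ in B,
          (ENNReal.ofReal (r ^ 2) + ENNReal.ofReal (r ^ 2))) := by
        gcongr _ * (_ * ?_)
        refine setLIntegral_mono' hB fun ω hω => ?_
        gcongr
        exacts [(hr ω hω).1, (hr ω hω).2]
    _ = ENNReal.ofReal (2 * (2 * π * r) ^ 2 * C) * volume B := by
        rw [setLIntegral_const, ← ENNReal.ofReal_add (sq_nonneg r) (sq_nonneg r), ← mul_assoc,
          ← mul_assoc, ← ENNReal.ofReal_mul (by positivity), ← ENNReal.ofReal_mul (by positivity)]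
        ring_nf

lemma exists_ball_norm_weightedCoords_le {r : ℝ} (lam e : Fin d → ℝ)
    (hr : ‖weightedCoords lam e‖ / 2 < r) : ∃ x : Fin d → ℝ, ∃ δ > 0, ∀ ω ∈ Metric.ball x δ,
      ‖weightedCoords lam ω‖ ≤ r ∧ ‖weightedCoords lam (ω + e)‖ ≤ r := by
  have hcont := (weightedCoords lam).continuous_of_finiteDimensional
  have hopen : IsOpen {ω | ‖weightedCoords lam ω‖ < r ∧ ‖weightedCoords lam (ω + e)‖ < r} :=
    (isOpen_lt hcont.norm continuous_const).inter
      (isOpen_lt (hcont.comp (continuous_add_const e)).norm continuous_const)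
  have hmid : -(1 / 2 : ℝ) • e + e = (1 / 2 : ℝ) • e := by module
  obtain ⟨δ, hδ, hball⟩ := Metric.isOpen_iff.1 hopen (-(1 / 2 : ℝ) • e) (by
    simp only [Set.mem_ofPred_eq, hmid, map_smul, norm_smul, norm_neg]
    norm_num
    linarith)
  exact ⟨_, δ, hδ, fun ω hω => (hball hω).imp le_of_lt le_of_lt⟩

lemma ofReal_div_le_iSup_Phi_of_lt (hL : 0 ≤ L) (hK : Measurable K) (hk : k ≠ 0) {r : ℝ}
    (hr : ‖weightedCoords lam (freqShift h k)‖ / 2 < r) :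
    ENNReal.ofReal (L / (2 * (2 * π * r) ^ 2)) ≤ ⨆ F ∈ SpecClass d L lam, Phi d h F K := by
  obtain ⟨x, δ, hδ, hB⟩ := exists_ball_norm_weightedCoords_le lam (freqShift h k) hr
  have hr₀ : 0 < r := lt_of_le_of_lt (by positivity) hr
  have htop : volume (Metric.ball x δ) ≠ ⊤ := measure_ball_lt_top.ne
  have hV : 0 < (volume (Metric.ball x δ)).toReal :=
    ENNReal.toReal_pos (Metric.measure_ball_pos volume x hδ).ne' htop
  set V := (volume (Metric.ball x δ)).toReal
  set C := L / (2 * (2 * π * r) ^ 2) / V with hC_def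
  have hC : 0 ≤ C := by positivity
  have hvol : volume (Metric.ball x δ) = ENNReal.ofReal V := (ENNReal.ofReal_toReal htop).symm
  have hmem : twinBump C (Metric.ball x δ) (freqShift h k) ∈ SpecClass d L lam := by
    refine twinBump_mem_SpecClass hC measurableSet_ball htop hB (le_of_eq ?_)
    rw [hvol, ← ENNReal.ofReal_mul (by positivity)]
    congr 1
    rw [hC_def]
    field_simp
  calc ENNReal.ofReal (L / (2 * (2 * π * r) ^ 2))
      = ENNReal.ofReal C * volume (Metric.ball x δ) := by
        rw [hvol, ← ENNReal.ofReal_mul hC, div_mul_cancel₀ _ hV.ne']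
    _ ≤ Phi d h (twinBump C (Metric.ball x δ) (freqShift h k)) K :=
        mul_volume_le_Phi_twinBump hC measurableSet_ball hk hK
    _ ≤ ⨆ F ∈ SpecClass d L lam, Phi d h F K := le_iSup₂ (f := fun F _ => Phi d h F K) _ hmem

theorem ofReal_div_le_iSup_Phi (hL : 0 ≤ L) (hK : Measurable K)
    (hk : weightedCoords lam (freqShift h k) ≠ 0) :
    ENNReal.ofReal (L / 2 / (π * ‖weightedCoords lam (freqShift h k)‖) ^ 2) ≤
      ⨆ F ∈ SpecClass d L lam, Phi d h F K := by
  have hk₀ : k ≠ 0 := by rintro rfl; simp at hk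
  set r₀ := ‖weightedCoords lam (freqShift h k)‖
  have hr₀ : 0 < r₀ := norm_pos_iff.2 hk
  have hcont : ContinuousAt (fun r : ℝ => ENNReal.ofReal (L / (2 * (2 * π * r) ^ 2))) (r₀ / 2) :=
    ENNReal.continuous_ofReal.continuousAt.comp (by fun_prop (disch := positivity))
  have hlim := hcont.tendsto.mono_left (nhdsWithin_le_nhds (s := Set.Ioi (r₀ / 2)))
  have hle := le_of_tendsto hlim <| eventually_nhdsWithin_of_forall fun r hr =>
    ofReal_div_le_iSup_Phi_of_lt hL hK hk₀ hr
  have hconst : L / 2 / (π * r₀) ^ 2 = L / (2 * (2 * π * (r₀ / 2)) ^ 2) := by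
    field_simp
  rwa [hconst]

end LowerBound

section Minimax

variable {d : ℕ} {h lam : Fin d → ℝ} {L : ℝ}

lemma le_iSup_div_smul (hlam : ∀ i, 0 < lam i) (i : Fin d) :
    h i ≤ ((⨆ j, h j / lam j) • lam) i :=
  (div_le_iff₀ (hlam i)).1 (le_ciSup (f := fun j => h j / lam j) (Set.finite_range _).bddAbove i)

lemma ofReal_iSup_div_le_iSup_Phi (hd : 1 ≤ d) (hh : ∀ i, 0 < h i) (hlam : ∀ i, 0 < lam i)
    (hL : 0 ≤ L) {K : (Fin d → ℝ) → ℝ} (hK : Measurable K) :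
    ENNReal.ofReal (L / 2 * ((⨆ i, h i / lam i) / π) ^ 2) ≤
      ⨆ F ∈ SpecClass d L lam, Phi d h F K := by
  have _ : Nonempty (Fin d) := ⟨⟨0, hd⟩⟩
  obtain ⟨i, hi⟩ := exists_eq_ciSup_of_finite (f := fun i => h i / lam i)
  have hsingle : weightedCoords lam (freqShift h (Pi.single i 1)) =
      EuclideanSpace.single i (lam i / h i) := by
    ext j
    rcases eq_or_ne j i with rfl | hj
    · simp [weightedCoords, freqShift, div_eq_mul_inv]
    · simp [weightedCoords, freqShift, hj]
  have hpos : 0 < lam i / h i := div_pos (hlam i) (hh i)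
  have hnorm : ‖weightedCoords lam (freqShift h (Pi.single i 1))‖ = lam i / h i := by
    rw [hsingle, PiLp.norm_single, norm_of_nonneg hpos.le]
  have hne : weightedCoords lam (freqShift h (Pi.single i 1)) ≠ 0 :=
    norm_pos_iff.1 (hnorm ▸ hpos)
  have hconst : L / 2 * (h i / lam i / π) ^ 2 = L / 2 / (π * (lam i / h i)) ^ 2 := by
    have hhi := (hh i).ne'
    have hlami := (hlam i).ne'
    field_simp
  rw [← hi, hconst, ← hnorm]
  exact ofReal_div_le_iSup_Phi hL hK hne

lemma zero_mem_SpecClass (d : ℕ) (L : ℝ) (lam : Fin d → ℝ) : (fun _ => 0) ∈ SpecClass d L lam :=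
  mem_SpecClass_iff.2 ⟨measurable_const, integrable_zero _ _ _, fun _ => le_rfl, by simp⟩

theorem variable_fidelity_minimax_general (d : ℕ) (hd : 1 ≤ d) (hf hg lamf lamg : Fin d → ℝ)
    (hhf : ∀ i, 0 < hf i) (hhg : ∀ i, 0 < hg i) (hlamf : ∀ i, 0 < lamf i)
    (hlamg : ∀ i, 0 < lamg i) (ρ Lf Lg : ℝ) (hLf : 0 ≤ Lf) (hLg : 0 ≤ Lg) :
    (⨅ Kf ∈ {K : (Fin d → ℝ) → ℝ | Measurable K},
      ⨅ Kg ∈ {K : (Fin d → ℝ) → ℝ | Measurable K},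
        ⨆ F ∈ SpecClass d Lf lamf, ⨆ G ∈ SpecClass d Lg lamg,
          (Phi d hg G Kg + ENNReal.ofReal (ρ ^ 2) * Phi d hf F Kf))
      = ENNReal.ofReal (ρ ^ 2 * (Lf / 2) * ((⨆ i, hf i / lamf i) / π) ^ 2 +
          Lg / 2 * ((⨆ i, hg i / lamg i) / π) ^ 2) := by
  rw [mul_assoc, add_comm, ENNReal.ofReal_add (by positivity) (by positivity),
    ENNReal.ofReal_mul (sq_nonneg ρ)]
  apply le_antisymm
  · refine iInf₂_le_of_le _ (measurable_minimaxKernel hhf (le_iSup_div_smul hlamf)) <|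
      iInf₂_le_of_le _ (measurable_minimaxKernel hhg (le_iSup_div_smul hlamg)) <|
        iSup₂_le fun F hF => iSup₂_le fun G hG => ?_
    gcongr
    · exact Phi_minimaxKernel_le hhg (le_iSup_div_smul hlamg) hG
    · exact Phi_minimaxKernel_le hhf (le_iSup_div_smul hlamf) hF
  · refine le_iInf₂ fun Kf hKf => le_iInf₂ fun Kg hKg => ?_
    calc _ ≤ (⨆ G ∈ SpecClass d Lg lamg, Phi d hg G Kg) +
          ENNReal.ofReal (ρ ^ 2) * ⨆ F ∈ SpecClass d Lf lamf, Phi d hf F Kf := by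
          gcongr
          · exact ofReal_iSup_div_le_iSup_Phi hd hhg hlamg hLg hKg
          · exact ofReal_iSup_div_le_iSup_Phi hd hhf hlamf hLf hKf
      _ ≤ _ := by
          simp only [ENNReal.mul_iSup]
          refine ENNReal.biSup_add_biSup_le ⟨_, zero_mem_SpecClass d Lg lamg⟩
            ⟨_, zero_mem_SpecClass d Lf lamf⟩ fun G hG F hF => ?_
          exact le_iSup₂_of_le F hF (le_iSup₂_of_le G hG le_rfl)

end Minimax

/-- Theorem 4: the minimax interpolation error of the variable fidelity model
`u = ρf + g` with `u` observed on the grid `hℤ^d` and `f` observed on the grid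
`(h/κ)ℤ^d` equals `ρ²(L_f/2)(h/(κπ))² + (L_g/2)(h/π)²`; analytically, the inf
over pairs of kernels `(K̂_f, K̂_g)` of the sup over `F ∈ 𝓕(L_f, 𝟏)` and
`G ∈ 𝓕(L_g, 𝟏)` of `Φ_{hI}(G, K̂_g) + ρ² Φ_{(h/κ)I}(F, K̂_f)`. -/
theorem variable_fidelity_minimax (d : ℕ) (hd : 1 ≤ d) (h : ℝ) (hh : 0 < h)
    (κ : ℕ) (hκ : 0 < κ) (ρ : ℝ) (Lf Lg : ℝ) (hLf : 0 < Lf) (hLg : 0 < Lg) :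
    (⨅ Kf ∈ {K : (Fin d → ℝ) → ℝ | Measurable K},
      ⨅ Kg ∈ {K : (Fin d → ℝ) → ℝ | Measurable K},
        ⨆ F ∈ SpecClass d Lf (fun _ => 1), ⨆ G ∈ SpecClass d Lg (fun _ => 1),
          (Phi d (fun _ => h) G Kg +
            ENNReal.ofReal (ρ ^ 2) * Phi d (fun _ => h / (κ : ℝ)) F Kf))
      = ENNReal.ofReal (ρ ^ 2 * (Lf / 2) * (h / ((κ : ℝ) * π)) ^ 2 +
          (Lg / 2) * (h / π) ^ 2) := by
  have _ : Nonempty (Fin d) := ⟨⟨0, hd⟩⟩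
  simpa only [div_one, ciSup_const, div_div] using
    variable_fidelity_minimax_general d hd (fun _ => h / κ) (fun _ => h) (fun _ => 1) (fun _ => 1)
      (fun _ => by positivity) (fun _ => hh) (fun _ => one_pos) (fun _ => one_pos) ρ Lf Lg
      hLf.le hLg.le
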